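/- Let R be an associative ring, let P^• be a complex of fp-projective right R-modules, and let J^• be an acyclic complex of fp-injective right R-modules whose modules of cocycles are all fp-injective. Then every morphism of complexes P^• → J^• is homotopic to zero. -/

import Mathlib

/-!
STATEMENT 2: Let R be an associative ring, let P^• be a complex of
fp-projective right R-modules, and let J^• be an acyclic complex of
fp-injective right R-modules whose modules of cocycles are all fp-injective.
Then every morphism of complexes P^• → J^• is homotopic to zero.

Right `R`-modules are formalized as modules over the opposite ring `Rᵐᵒᵖ`.
-/

open CategoryTheory Limits

universe u

namespace Stmt2

variable (R : Type u) [Ring R]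

/-- The category of right `R`-modules. -/
abbrev RightMod := ModuleCat.{u} Rᵐᵒᵖ

instance : HasExt.{u + 1} (RightMod R) := by
  letI := HasDerivedCategory.standard (RightMod R)
  exact hasExt_of_hasDerivedCategory _

/-- A right `R`-module `J` is fp-injective if `Ext¹(T, J) = 0` for every
finitely presented right `R`-module `T`. -/
def FpInjective (J : RightMod R) : Prop :=
  ∀ T : RightMod R, Module.FinitePresentation Rᵐᵒᵖ T →
    Subsingleton (Abelian.Ext T J 1)

/-- A right `R`-module `P` is fp-projective if `Ext¹(P, J) = 0` for every
fp-injective right `R`-module `J`. -/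
def FpProjective (P : RightMod R) : Prop :=
  ∀ J : RightMod R, FpInjective R J → Subsingleton (Abelian.Ext P J 1)

section Abstract
variable {S : Type u} [Ring S]

/-- relative finite presentation -/
def FPRel {M : Type u} [AddCommGroup M] [Module S M] (N N' : Submodule S M) : Prop :=
  Module.FinitePresentation S (N' ⧸ N.submoduleOf N')

/-- modules with a sufficiently rich family of submodules -/
def IsHill (S : Type u) [Ring S] (M : Type u) [AddCommGroup M] [Module S M] : Prop :=
  ∃ H : Set (Submodule S M), (∀ c ⊆ H, sSup c ∈ H) ∧
    ∀ N ∈ H, ∀ x : M, ∃ N' ∈ H, N ≤ N' ∧ x ∈ N' ∧ FPRel N N'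

lemma FPRel.refl {M : Type u} [AddCommGroup M] [Module S M] (N : Submodule S M) : FPRel N N := by
  unfold FPRel
  have : Subsingleton (N ⧸ N.submoduleOf N) := by
    rw [Submodule.Quotient.subsingleton_iff]
    simp
  exact Module.finitePresentation_of_projective S _

lemma FPRel.trans {M : Type u} [AddCommGroup M] [Module S M] {N₁ N₂ N₃ : Submodule S M}
    (h12 : N₁ ≤ N₂) (h23 : N₂ ≤ N₃) (h : FPRel N₁ N₂) (h' : FPRel N₂ N₃) : FPRel N₁ N₃ := by
  unfold FPRel at *
  let l : (N₃ ⧸ N₁.submoduleOf N₃) →ₗ[S] (N₃ ⧸ N₂.submoduleOf N₃) :=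
    Submodule.factor (Submodule.comap_mono h12)
  have hl : Function.Surjective l := Submodule.factor_surjective _
  have lmk : ∀ y, l (Submodule.Quotient.mk y) = Submodule.Quotient.mk y := fun _ => rfl
  let k : N₂ →ₗ[S] (N₃ ⧸ N₁.submoduleOf N₃) := (N₁.submoduleOf N₃).mkQ ∘ₗ Submodule.inclusion h23
  have hk : ∀ x, k x ∈ LinearMap.ker l := by
    intro x
    simp only [LinearMap.mem_ker, k, LinearMap.comp_apply, Submodule.mkQ_apply,
      lmk, Submodule.Quotient.mk_eq_zero]
    simp [Submodule.submoduleOf]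
  let k' := k.codRestrict (LinearMap.ker l) hk
  have hk's : Function.Surjective k' := by
    rintro ⟨y, hy⟩
    obtain ⟨y, rfl⟩ := Submodule.mkQ_surjective _ y
    simp only [LinearMap.mem_ker, Submodule.mkQ_apply,
      lmk, Submodule.Quotient.mk_eq_zero] at hy
    refine ⟨⟨y.1, hy⟩, ?_⟩
    apply Subtype.ext
    rfl
  have hker : LinearMap.ker k' = N₁.submoduleOf N₂ := by
    ext x
    simp only [k', LinearMap.ker_codRestrict, LinearMap.mem_ker, k, LinearMap.comp_apply,
      Submodule.mkQ_apply, Submodule.Quotient.mk_eq_zero]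
    rfl
  have e : (N₂ ⧸ N₁.submoduleOf N₂) ≃ₗ[S] LinearMap.ker l :=
    (Submodule.quotEquivOfEq _ _ hker.symm).trans (k'.quotKerEquivOfSurjective hk's)
  have : Module.FinitePresentation S (LinearMap.ker l) := Module.FinitePresentation.of_equiv e
  exact Module.finitePresentation_of_ker l hl

/-- a two-sided sequence constructed from a starting point upwards -/
lemma exists_int_seq {C : ℤ → Type u} (r : ∀ n, C n → C (n + 1) → Prop)
    (hr : ∀ n (c : C n), ∃ c', r n c c') (b : ∀ n, C n) (hb : ∀ n c, r n (b n) c)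
    (n₀ : ℤ) (c₀ : C n₀) : ∃ f : ∀ n, C n, f n₀ = c₀ ∧ ∀ n, r n (f n) (f (n + 1)) := by
  choose g hg using hr
  let f : ∀ n, C n := fun n =>
    Int.inductionOn' (motive := C) n n₀ c₀ (fun k _ c => g k c) (fun k _ _ => b (k - 1))
  refine ⟨f, Int.inductionOn'_self, fun n => ?_⟩
  rcases le_or_gt n₀ n with h | h
  · have : f (n + 1) = g n (f n) := Int.inductionOn'_add_one h
    rw [this]; exact hg _ _
  · obtain ⟨m, rfl⟩ : ∃ m, n = m - 1 := ⟨n + 1, by ring⟩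
    have : f (m - 1) = b (m - 1) := Int.inductionOn'_sub_one (by omega)
    rw [this]; exact hb _ _

section
variable {J : ℤ → Type u} [∀ n, AddCommGroup (J n)] [∀ n, Module S (J n)]
  (dJ : ∀ n, J n →ₗ[S] J (n + 1))
variable {Q : ℤ → Type u} [∀ n, AddCommGroup (Q n)] [∀ n, Module S (Q n)]
  (dQ : ∀ n, Q n →ₗ[S] Q (n + 1))

/-- exactness of Hom from finitely presented modules -/
def HomExact : Prop := ∀ (n : ℤ) (T : Type u) [AddCommGroup T] [Module S T],
    Module.FinitePresentation S T → ∀ f : T →ₗ[S] J (n + 1), dJ (n + 1) ∘ₗ f = 0 →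
    ∃ g : T →ₗ[S] J n, dJ n ∘ₗ g = f

lemma homExact_coker (hH : HomExact dJ) {A B : Type u} [AddCommGroup A] [Module S A]
    [AddCommGroup B] [Module S B] (hA : Module.FinitePresentation S A)
    (hB : Module.FinitePresentation S B) (d : A →ₗ[S] B) (n : ℤ) (f : B →ₗ[S] J (n + 1))
    (hf : dJ (n + 1) ∘ₗ f = 0) (hfd : f ∘ₗ d = 0) :
    ∃ g : B →ₗ[S] J n, dJ n ∘ₗ g = f ∧ g ∘ₗ d = 0 := by
  have hle : LinearMap.range d ≤ LinearMap.ker f := LinearMap.range_le_ker_iff.2 hfd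
  have hC : Module.FinitePresentation S (B ⧸ LinearMap.range d) := by
    refine Module.finitePresentation_of_surjective (LinearMap.range d).mkQ
      (Submodule.mkQ_surjective _) ?_
    rw [Submodule.ker_mkQ]
    exact Module.Finite.iff_fg.1 inferInstance
  obtain ⟨g, hg⟩ := hH n _ hC ((LinearMap.range d).liftQ f hle) (by
    apply Submodule.linearMap_qext
    rw [LinearMap.comp_assoc, Submodule.liftQ_mkQ, hf, LinearMap.zero_comp])
  refine ⟨g ∘ₗ (LinearMap.range d).mkQ, ?_, ?_⟩
  · rw [← LinearMap.comp_assoc, hg, Submodule.liftQ_mkQ]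
  · rw [LinearMap.comp_assoc, LinearMap.range_mkQ_comp, LinearMap.comp_zero]

theorem null_of_fp (hdJ : ∀ n, dJ (n + 1) ∘ₗ dJ n = 0) (hdQ : ∀ n, dQ (n + 1) ∘ₗ dQ n = 0)
    (hH : HomExact dJ) (hQ : ∀ n, Module.FinitePresentation S (Q n))
    (φ : ∀ n, Q n →ₗ[S] J (n + 1)) (hφ : ∀ n, dJ (n + 1) ∘ₗ φ n = φ (n + 1) ∘ₗ dQ n) :
    ∃ s : ∀ n, Q n →ₗ[S] J n, ∀ n, φ n = dJ n ∘ₗ s n + s (n + 1) ∘ₗ dQ n := by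
  -- work in degrees `n + 1`
  have h1 : ∀ n, ∃ r : Q (n + 1) →ₗ[S] J (n + 1 + 1), dJ (n + 1 + 1) ∘ₗ r =
      dJ (n + 1 + 1) ∘ₗ φ (n + 1) ∧ r ∘ₗ dQ n = 0 := by
    intro n
    refine homExact_coker dJ hH (hQ n) (hQ (n + 1)) (dQ n) (n + 1 + 1) _ ?_ ?_
    · rw [← LinearMap.comp_assoc, hdJ, LinearMap.zero_comp]
    · rw [hφ, LinearMap.comp_assoc, hdQ, LinearMap.comp_zero]
  choose r hr hr' using h1
  have h2 : ∀ n, ∃ x : Q (n + 1) →ₗ[S] J (n + 1), dJ (n + 1) ∘ₗ x = φ (n + 1) - r n := by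
    intro n
    refine hH (n + 1) _ (hQ _) _ ?_
    rw [LinearMap.comp_sub, hr, sub_self]
  choose x hx using h2
  have h3 : ∀ n, ∃ y : Q (n + 1) →ₗ[S] J (n + 1), dJ (n + 1) ∘ₗ y =
      r n - x (n + 1) ∘ₗ dQ (n + 1) ∧ y ∘ₗ dQ n = 0 := by
    intro n
    refine homExact_coker dJ hH (hQ n) (hQ (n + 1)) (dQ n) (n + 1) _ ?_ ?_
    · rw [LinearMap.comp_sub, hr, ← LinearMap.comp_assoc, hx, LinearMap.sub_comp, hr', hφ, sub_zero,
        sub_self]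
    · rw [LinearMap.sub_comp, hr', LinearMap.comp_assoc, hdQ, LinearMap.comp_zero, sub_zero]
  choose y hy hy' using h3
  have key : ∀ n, φ (n + 1) = dJ (n + 1) ∘ₗ (x n + y n) +
      (x (n + 1) + y (n + 1)) ∘ₗ dQ (n + 1) := by
    intro n
    rw [LinearMap.comp_add, LinearMap.add_comp, hx, hy, hy']
    abel
  have h4 : ∃ s : ∀ n, Q n →ₗ[S] J n, ∀ n, s (n + 1) = x n + y n := by
    have h : ∀ n : ℤ, ∃ s : Q n →ₗ[S] J n, ∀ m (h : n = m + 1), h ▸ s = x m + y m := by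
      intro n
      obtain ⟨m, rfl⟩ : ∃ m, n = m + 1 := ⟨n - 1, by ring⟩
      refine ⟨x m + y m, fun m' h => ?_⟩
      obtain rfl : m = m' := by omega
      rfl
    choose s hs using h
    exact ⟨s, fun n => hs (n + 1) n rfl⟩
  obtain ⟨s, hs⟩ := h4
  refine ⟨s, fun n => ?_⟩
  obtain ⟨m, rfl⟩ : ∃ m, n = m + 1 := ⟨n - 1, by ring⟩
  rw [hs, hs]
  exact key m

lemma FPRel.exists_finset {M : Type u} [AddCommGroup M] [Module S M] {N N' : Submodule S M}
    (h : FPRel N N') : ∃ X : Finset M, N' ≤ N ⊔ Submodule.span S X := by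
  classical
  unfold FPRel at h
  obtain ⟨t, ht⟩ : (⊤ : Submodule S (N' ⧸ N.submoduleOf N')).FG := Module.Finite.fg_top
  choose g hg using Submodule.mkQ_surjective (N.submoduleOf N')
  refine ⟨t.image (fun y => (g y : M)), fun x hx => ?_⟩
  have h1 : (N.submoduleOf N').mkQ ⟨x, hx⟩ ∈ Submodule.span S (t : Set _) := by rw [ht]; trivial
  have h2 : (t : Set (N' ⧸ N.submoduleOf N')) = Set.image (N.submoduleOf N').mkQ (Set.image g t) := by
    rw [← Set.image_comp]
    ext y; simp [hg]
  rw [h2, Submodule.span_image] at h1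
  obtain ⟨z, hz, hzx⟩ := h1
  rw [← sub_eq_zero, ← map_sub, Submodule.mkQ_apply, Submodule.Quotient.mk_eq_zero] at hzx
  have h3 : (z : M) - x ∈ N := hzx
  have h4 : (z : M) ∈ Submodule.span S (Set.image N'.subtype (Set.image g t)) := by
    rw [Submodule.span_image]
    exact ⟨z, hz, rfl⟩
  have h5 : ((t.image (fun y => (g y : M)) : Finset M) : Set M) = Set.image N'.subtype (Set.image g t) := by
    rw [← Set.image_comp]; simp
  rw [h5]
  have : x = -((z : M) - x) + z := by abel
  rw [this]
  exact Submodule.add_mem_sup (N.neg_mem h3) h4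

lemma hill_finset {M : Type u} [AddCommGroup M] [Module S M] {H : Set (Submodule S M)}
    (hH : ∀ N ∈ H, ∀ x : M, ∃ N' ∈ H, N ≤ N' ∧ x ∈ N' ∧ FPRel N N') (X : Finset M) :
    ∀ N ∈ H, ∃ N' ∈ H, N ≤ N' ∧ (X : Set M) ⊆ N' ∧ FPRel N N' := by
  classical
  induction X using Finset.induction_on with
  | empty => exact fun N hN => ⟨N, hN, le_rfl, by simp, FPRel.refl N⟩
  | insert a X _ ih =>
    intro N hN
    obtain ⟨N₁, h₁, h₁', h₁'', h₁f⟩ := ih N hN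
    obtain ⟨N₂, h₂, h₂', h₂'', h₂f⟩ := hH N₁ h₁ a
    refine ⟨N₂, h₂, h₁'.trans h₂', ?_, h₁f.trans h₁' h₂' h₂f⟩
    rw [Finset.coe_insert, Set.insert_subset_iff]
    exact ⟨h₂'', h₁''.trans h₂'⟩

/-- extension property of fp-injective modules -/
def ExtProp (S : Type u) [Ring S] (E : Type u) [AddCommGroup E] [Module S E] : Prop :=
  ∀ (M : Type u) [AddCommGroup M] [Module S M] (N : Submodule S M),
    Module.FinitePresentation S (M ⧸ N) → ∀ f : N →ₗ[S] E, ∃ g : M →ₗ[S] E, ∀ x : N, g x = f x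

/-- the extension step for partial homotopies -/
lemma extend_step (hdJ : ∀ n, dJ (n + 1) ∘ₗ dJ n = 0) (hdQ : ∀ n, dQ (n + 1) ∘ₗ dQ n = 0)
    (hH : HomExact dJ) (hE : ∀ n, ExtProp S (J n))
    (φ : ∀ n, Q n →ₗ[S] J (n + 1)) (hφ : ∀ n, dJ (n + 1) ∘ₗ φ n = φ (n + 1) ∘ₗ dQ n)
    (s : ∀ n, Q n →ₗ.[S] J n)
    (hs : ∀ n, ∀ x : (s n).domain, ∃ hx : dQ n x ∈ (s (n + 1)).domain,
      φ n x = dJ n (s n x) + s (n + 1) ⟨dQ n x, hx⟩)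
    (N : ∀ n, Submodule S (Q n)) (hN : ∀ n, (s n).domain ≤ N n)
    (hNd : ∀ n, ∀ x ∈ N n, dQ n x ∈ N (n + 1)) (hNf : ∀ n, FPRel (s n).domain (N n)) :
    ∃ s' : ∀ n, N n →ₗ[S] J n, (∀ n x (hx : x ∈ (s n).domain), s' n ⟨x, hN n hx⟩ = s n ⟨x, hx⟩) ∧
      ∀ n (x : N n), φ n x = dJ n (s' n x) + s' (n + 1) ⟨dQ n x, hNd n x x.2⟩ := by
  have h1 : ∀ n, ∃ t : N n →ₗ[S] J n, ∀ x (hx : x ∈ (s n).domain),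
      t ⟨x, hN n hx⟩ = s n ⟨x, hx⟩ := by
    intro n
    let f : ((s n).domain.submoduleOf (N n)) →ₗ[S] J n := (s n).toFun ∘ₗ
      LinearMap.codRestrict (s n).domain ((N n).subtype ∘ₗ Submodule.subtype _) (fun x => x.2)
    obtain ⟨g, hg⟩ := hE n (N n) ((s n).domain.submoduleOf (N n)) (hNf n) f
    exact ⟨g, fun x hx => hg ⟨⟨x, hN n hx⟩, hx⟩⟩
  choose t ht using h1
  let dN : ∀ n, N n →ₗ[S] N (n + 1) := fun n => (dQ n).restrict (hNd n)
  let e : ∀ n, N n →ₗ[S] J (n + 1) := fun n =>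
    φ n ∘ₗ (N n).subtype - (dJ n ∘ₗ t n + t (n + 1) ∘ₗ dN n)
  have he : ∀ n, (s n).domain.submoduleOf (N n) ≤ LinearMap.ker (e n) := by
    rintro n ⟨x, hxN⟩ hx
    have hx : x ∈ (s n).domain := hx
    obtain ⟨h, h'⟩ := hs n ⟨x, hx⟩
    have h2 := ht (n + 1) _ h
    simp only [LinearMap.mem_ker, e, LinearMap.sub_apply, LinearMap.add_apply,
      LinearMap.comp_apply, ht n x hx]
    rw [sub_eq_zero]
    refine Eq.trans h' ?_
    rw [← h2]
    rfl
  let K : ℤ → Type u := fun n => N n ⧸ (s n).domain.submoduleOf (N n)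
  have hmap : ∀ n, (s n).domain.submoduleOf (N n) ≤
      ((s (n + 1)).domain.submoduleOf (N (n + 1))).comap (dN n) := by
    rintro n ⟨x, hxN⟩ hx
    exact (hs n ⟨x, hx⟩).1
  let dK : ∀ n, K n →ₗ[S] K (n + 1) := fun n => Submodule.mapQ _ _ (dN n) (hmap n)
  let ψ : ∀ n, K n →ₗ[S] J (n + 1) := fun n => Submodule.liftQ _ (e n) (he n)
  have hdd : ∀ n x, dJ (n + 1) (dJ n x) = 0 := fun n x => LinearMap.congr_fun (hdJ n) x
  have hdd' : ∀ n x, dQ (n + 1) (dQ n x) = 0 := fun n x => LinearMap.congr_fun (hdQ n) x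
  have hφ' : ∀ n x, dJ (n + 1) (φ n x) = φ (n + 1) (dQ n x) :=
    fun n x => LinearMap.congr_fun (hφ n) x
  have hdN : ∀ n x, dN (n + 1) (dN n x) = 0 := fun n x => Subtype.ext (hdd' n x)
  obtain ⟨u, hu⟩ := null_of_fp (J := J) (Q := K) dJ dK hdJ (by
      intro n
      apply Submodule.linearMap_qext
      ext x
      change Submodule.Quotient.mk (dN (n + 1) (dN n x)) = _
      rw [hdN]; rfl) hH hNf ψ (by
      intro n
      apply Submodule.linearMap_qext
      ext x
      change dJ (n + 1) (e n x) = e (n + 1) (dN n x)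
      simp only [e, LinearMap.sub_apply, LinearMap.add_apply, LinearMap.comp_apply, map_sub,
        map_add, hdd, hdN, map_zero]
      rw [Submodule.subtype_apply, hφ']
      change φ (n + 1) (dQ n x) - _ = φ (n + 1) (dQ n x) - _
      abel)
  refine ⟨fun n => t n + u n ∘ₗ Submodule.mkQ _, ?_, ?_⟩
  · intro n x hx
    rw [LinearMap.add_apply, ht n x hx, LinearMap.comp_apply]
    have : ((s n).domain.submoduleOf (N n)).mkQ ⟨x, hN n hx⟩ = 0 := by
      rw [Submodule.mkQ_apply, Submodule.Quotient.mk_eq_zero]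
      exact hx
    rw [this, map_zero, add_zero]
  · intro n x
    have h := LinearMap.congr_fun (hu n) (Submodule.Quotient.mk x)
    have h2 : e n x = dJ n (u n (Submodule.Quotient.mk x)) +
      u (n + 1) (Submodule.Quotient.mk (dN n x)) := h
    have h3 : φ n x = e n x + (dJ n (t n x) + t (n + 1) (dN n x)) := by
      simp [e]
    rw [h3, h2]
    simp only [LinearMap.add_apply, LinearMap.comp_apply, map_add]
    change _ = dJ n (t n x) + dJ n (u n (Submodule.Quotient.mk x)) + (t (n + 1) (dN n x) + u (n + 1) (Submodule.Quotient.mk (dN n x)))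
    abel

theorem null_of_hill (hdJ : ∀ n, dJ (n + 1) ∘ₗ dJ n = 0) (hdQ : ∀ n, dQ (n + 1) ∘ₗ dQ n = 0)
    (hH : HomExact dJ) (hE : ∀ n, ExtProp S (J n)) (hQ : ∀ n, IsHill S (Q n))
    (φ : ∀ n, Q n →ₗ[S] J (n + 1)) (hφ : ∀ n, dJ (n + 1) ∘ₗ φ n = φ (n + 1) ∘ₗ dQ n) :
    ∃ s : ∀ n, Q n →ₗ[S] J n, ∀ n, φ n = dJ n ∘ₗ s n + s (n + 1) ∘ₗ dQ n := by
  choose H hHs hHe using hQ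
  let A : Set (∀ n, Q n →ₗ.[S] J n) := {s | (∀ n, (s n).domain ∈ H n) ∧
    ∀ n, ∀ x : (s n).domain, ∃ hx : dQ n x ∈ (s (n + 1)).domain,
      φ n x = dJ n (s n x) + s (n + 1) ⟨dQ n x, hx⟩}
  have hbot : (fun n => (⊥ : Q n →ₗ.[S] J n)) ∈ A := by
    refine ⟨fun n => ?_, fun n x => ?_⟩
    · have := hHs n ∅ (Set.empty_subset _)
      rwa [sSup_empty] at this
    · obtain ⟨x, hx⟩ := x
      obtain rfl : x = 0 := hx
      refine ⟨by simp, ?_⟩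
      change φ n 0 = dJ n 0 + 0
      simp
  obtain ⟨s, -, hs, hmax⟩ := zorn_le_nonempty₀ A (by
    intro c hcA hc y hy
    have hdir : ∀ n, DirectedOn (· ≤ ·) (Set.image (fun s : ∀ n, Q n →ₗ.[S] J n => s n) c) := by
      intro n
      refine IsChain.directedOn ?_
      rintro _ ⟨a, ha, rfl⟩ _ ⟨b, hb, rfl⟩ hab
      rcases hc ha hb (fun h => hab (h ▸ rfl)) with h | h
      · exact Or.inl (h n)
      · exact Or.inr (h n)
    have hle : ∀ z ∈ c, ∀ n, z n ≤ LinearPMap.sSup _ (hdir n) := fun z hz n =>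
      LinearPMap.le_sSup (hdir n) ⟨z, hz, rfl⟩
    refine ⟨fun n => LinearPMap.sSup _ (hdir n), ⟨fun n => ?_, fun n => ?_⟩, fun z hz n => hle z hz n⟩
    · rw [LinearPMap.domain_sSup]
      apply hHs
      rintro _ ⟨_, ⟨z, hz, rfl⟩, rfl⟩
      exact (hcA hz).1 n
    · rintro ⟨x, hx⟩
      obtain ⟨_, ⟨z, hz, rfl⟩, hxz⟩ := (LinearPMap.mem_domain_sSup_iff
        (Set.Nonempty.image _ ⟨y, hy⟩) (hdir n)).1 hx
      obtain ⟨h1, h2⟩ := (hcA hz).2 n ⟨x, hxz⟩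
      refine ⟨(hle z hz (n + 1)).1 h1, ?_⟩
      refine h2.trans ?_
      rw [(hle z hz n).2 (x := ⟨x, hxz⟩) (y := ⟨x, hx⟩) rfl,
        (hle z hz (n + 1)).2 (x := ⟨dQ n x, h1⟩) (y := ⟨dQ n x, (hle z hz (n + 1)).1 h1⟩) rfl])
    _ hbot
  have htop : ∀ n x, x ∈ (s n).domain := by
    intro n₀ x
    obtain ⟨c₀, hc₀, hc₀', hc₀x, hc₀f⟩ := hHe n₀ _ (hs.1 n₀) x
    obtain ⟨N, hN₀, hN⟩ := exists_int_seq
      (C := fun n => {N : Submodule S (Q n) // N ∈ H n ∧ (s n).domain ≤ N ∧ FPRel (s n).domain N})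
      (fun n c c' => ∀ y ∈ c.1, dQ n y ∈ c'.1) (by
        classical
        rintro n ⟨c, hc, hcs, hcf⟩
        obtain ⟨X, hX⟩ := hcf.exists_finset
        obtain ⟨N', h1, h2, h3, h4⟩ := hill_finset (hHe (n + 1)) (X.image (dQ n)) _ (hs.1 (n + 1))
        refine ⟨⟨N', h1, h2, h4⟩, fun y hy => ?_⟩
        have : (s n).domain ⊔ Submodule.span S (X : Set (Q n)) ≤ N'.comap (dQ n) := by
          refine sup_le (fun z hz => h2 (hs.2 n ⟨z, hz⟩).1) (Submodule.span_le.2 fun z hz => ?_)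
          exact h3 (by simpa using ⟨z, hz, rfl⟩)
        exact this (hX hy))
      (fun n => ⟨(s n).domain, hs.1 n, le_rfl, FPRel.refl _⟩)
      (fun n c y hy => c.2.2.1 (hs.2 n ⟨y, hy⟩).1)
      n₀ ⟨c₀, hc₀, hc₀', hc₀f⟩
    obtain ⟨s', hs', hs''⟩ := extend_step dJ dQ hdJ hdQ hH hE φ hφ s hs.2 (fun n => (N n).1)
      (fun n => (N n).2.2.1) hN (fun n => (N n).2.2.2)
    have := hmax (y := fun n => ⟨(N n).1, s' n⟩)
      ⟨fun n => (N n).2.1, fun n x => ⟨hN n x x.2, hs'' n x⟩⟩ (by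
        intro n
        refine ⟨(N n).2.2.1, ?_⟩
        rintro ⟨a, ha⟩ ⟨b, hb⟩ hab
        obtain rfl : a = b := hab
        exact (hs' n a ha).symm) n₀
    apply this.1
    change x ∈ (N n₀).1
    rw [hN₀]
    exact hc₀x
  refine ⟨fun n => (s n).toFun ∘ₗ LinearMap.codRestrict _ LinearMap.id (htop n), fun n => ?_⟩
  ext x
  obtain ⟨_, h⟩ := hs.2 n ⟨x, htop n x⟩
  exact h

end
end Abstract

section Cell
variable {S : Type u} [Ring S] {G : Type u} [AddCommGroup G] [Module S G]
  {I : Type u} {m : I → ℕ} (E : ∀ i, (Fin (m i) → S) →ₗ[S] G)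

/-- the submodule generated by a set of cells -/
def Gs (T : Set I) : Submodule S G := ⨆ i ∈ T, LinearMap.range (E i)

lemma Gs_mono {T T' : Set I} (h : T ⊆ T') : Gs E T ≤ Gs E T' := biSup_mono h

lemma E_mem_Gs {T : Set I} {i : I} (hi : i ∈ T) (c) : E i c ∈ Gs E T :=
  (le_biSup (fun i => LinearMap.range (E i)) hi : _ ≤ Gs E T) ⟨c, rfl⟩

lemma mem_Gs {T : Set I} {x : G} (hx : x ∈ Gs E T) :
    ∃ (s : Finset I) (c : ∀ i, Fin (m i) → S), (∀ i ∈ s, i ∈ T) ∧ x = ∑ i ∈ s, E i (c i) := by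
  classical
  unfold Gs at hx
  rw [Submodule.mem_iSup_iff_exists_finsupp] at hx
  obtain ⟨f, hf, rfl⟩ := hx
  have h : ∀ i, ∃ c, f i = E i c := by
    intro i
    by_cases hi : i ∈ T
    · have := hf i
      simp only [hi, iSup_pos] at this
      obtain ⟨c, hc⟩ := this
      exact ⟨c, hc.symm⟩
    · have := hf i
      simp only [hi, not_false_eq_true, iSup_neg] at this
      exact ⟨0, by rw [map_zero]; exact this⟩
  choose c hc using h
  refine ⟨f.support, c, fun i hi => ?_, ?_⟩
  · by_contra hiT
    have := hf i
    simp only [hiT, not_false_eq_true, iSup_neg] at this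
    exact (Finsupp.mem_support_iff.1 hi) this
  · exact Finset.sum_congr rfl fun i _ => hc i

variable (r : I → ℕ) (L : ∀ i, Submodule S (Fin (m i) → S))

/-- closed sets of cells -/
def ClosedCells (T : Set I) : Prop :=
  ∀ i ∈ T, ∀ c ∈ L i, E i c ∈ Gs E (T ∩ {j | r j < r i})

variable (h2 : ∀ i, ∀ c ∈ L i, E i c ∈ Gs E {j | r j < r i})
  (hL : ∀ i, (L i).FG)
  (h3 : ∀ (n : ℕ) (s : Finset I) (c : ∀ i, Fin (m i) → S), (∀ i ∈ s, r i = n) →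
    ∑ i ∈ s, E i (c i) ∈ Gs E {j | r j < n} → ∀ i ∈ s, c i ∈ L i)

include h3 in
lemma closed_inter {T : Set I} (hT : ClosedCells E r L T) (n : ℕ) {x : G} (hx : x ∈ Gs E T)
    (hxn : x ∈ Gs E {j | r j < n}) : x ∈ Gs E (T ∩ {j | r j < n}) := by
  classical
  have key : ∀ k, x ∈ Gs E (T ∩ {j | r j < k}) → x ∈ Gs E (T ∩ {j | r j < n}) := by
    intro k
    induction k with
    | zero => exact fun h => Gs_mono E (by rintro j ⟨_, hj⟩; simp at hj) h
    | succ k ih =>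
      intro h
      rcases lt_or_ge k n with hk | hk
      · refine Gs_mono E ?_ h
        rintro j ⟨h1, h2⟩
        exact ⟨h1, by simp only [Set.mem_ofPred_eq] at *; omega⟩
      · apply ih
        obtain ⟨s, c, hs, rfl⟩ := mem_Gs E h
        rw [← Finset.sum_filter_add_sum_filter_not s (fun i => r i = k)] at hxn ⊢
        have hlt : ∑ i ∈ s with ¬ r i = k, E i (c i) ∈ Gs E (T ∩ {j | r j < k}) := by
          refine Submodule.sum_mem _ fun i hi => E_mem_Gs E ?_ _
          rw [Finset.mem_filter] at hi
          obtain ⟨h1, h2⟩ := hs i hi.1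
          have := hi.2
          exact ⟨h1, by simp only [Set.mem_ofPred_eq] at *; omega⟩
        have heq : ∑ i ∈ s with r i = k, E i (c i) ∈ Gs E {j | r j < k} := by
          have h1 := Gs_mono E (T' := {j | r j < k})
            (fun j hj => by simp only [Set.mem_ofPred_eq] at *; omega) hxn
          have h2 := Gs_mono E Set.inter_subset_right hlt
          exact (Submodule.add_mem_iff_left _ h2).1 h1
        have hc := h3 k _ c (fun i hi => (Finset.mem_filter.1 hi).2) heq
        refine Submodule.add_mem _ (Submodule.sum_mem _ fun i hi => ?_) hlt
        have := hT i (hs i (Finset.mem_filter.1 hi).1).1 _ (hc i hi)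
        rwa [(Finset.mem_filter.1 hi).2] at this
  obtain ⟨s, c, hs, rfl⟩ := mem_Gs E hx
  refine key (s.sup r + 1) (Submodule.sum_mem _ fun i hi => ?_)
  have hmem : i ∈ T ∩ {j | r j < s.sup r + 1} :=
    ⟨hs i hi, Nat.lt_succ_of_le (Finset.le_sup (f := r) hi)⟩
  exact E_mem_Gs E hmem _

include h3 in
lemma closed_cell {T : Set I} (hT : ClosedCells E r L T) {i : I} (hi : i ∉ T) {c}
    (hc : E i c ∈ Gs E T) : c ∈ L i := by
  classical
  have h := closed_inter E r L h3 hT (r i + 1) hc (E_mem_Gs E (by simp) _)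
  obtain ⟨s, d, hs, hd⟩ := mem_Gs E h
  have his : i ∉ s.filter (fun j => r j = r i) := fun h => hi (hs i (Finset.mem_filter.1 h).1).1
  have := h3 (r i) (insert i (s.filter (fun j => r j = r i))) (Function.update (fun j => - d j) i c)
    (by intro j hj
        rcases Finset.mem_insert.1 hj with rfl | hj
        · rfl
        · exact (Finset.mem_filter.1 hj).2) (by
      rw [Finset.sum_insert his, Function.update_self, hd,
        ← Finset.sum_filter_add_sum_filter_not s (fun j => r j = r i)]
      have h1 : ∑ x ∈ s with r x = r i, E x (Function.update (fun j => - d j) i c x) =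
          - ∑ x ∈ s with r x = r i, E x (d x) := by
        rw [← Finset.sum_neg_distrib]
        refine Finset.sum_congr rfl fun x hx => ?_
        have : x ≠ i := fun h => his (h ▸ hx)
        rw [Function.update_of_ne this, map_neg]
      rw [h1, add_comm, neg_add_cancel_left]
      refine Submodule.sum_mem _ fun j hj => E_mem_Gs E ?_ _
      rw [Finset.mem_filter] at hj
      have h1 := (hs j hj.1).2
      have := hj.2
      simp only [Set.mem_ofPred_eq] at *
      omega) i (Finset.mem_insert_self _ _)
  rwa [Function.update_self] at this

include h3 hL in
lemma closed_add {T : Set I} (hT : ClosedCells E r L T) {i : I}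
    (hc : ∀ c ∈ L i, E i c ∈ Gs E (T ∩ {j | r j < r i})) :
    ClosedCells E r L (insert i T) ∧ FPRel (Gs E T) (Gs E (insert i T)) := by
  constructor
  · rintro j (rfl | hj) c hcj
    · exact Gs_mono E (Set.inter_subset_inter_left _ (Set.subset_insert _ _)) (hc c hcj)
    · exact Gs_mono E (Set.inter_subset_inter_left _ (Set.subset_insert _ _)) (hT j hj c hcj)
  · by_cases hi : i ∈ T
    · rw [Set.insert_eq_of_mem hi]; exact FPRel.refl _
    unfold FPRel
    let l : (Fin (m i) → S) →ₗ[S] (Gs E (insert i T) ⧸ (Gs E T).submoduleOf (Gs E (insert i T))) :=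
      Submodule.mkQ _ ∘ₗ (E i).codRestrict _ (fun c => E_mem_Gs E (Set.mem_insert i T) c)
    have hker : LinearMap.ker l = L i := by
      ext c
      simp only [LinearMap.mem_ker, l, LinearMap.comp_apply, Submodule.mkQ_apply,
        Submodule.Quotient.mk_eq_zero]
      change E i c ∈ Gs E T ↔ _
      exact ⟨closed_cell E r L h3 hT hi, fun h => Gs_mono E Set.inter_subset_left (hc c h)⟩
    refine Module.finitePresentation_of_free_of_surjective l ?_ (hker ▸ hL i)
    intro y
    obtain ⟨⟨y, hy⟩, rfl⟩ := Submodule.mkQ_surjective _ y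
    have hy' : y ∈ LinearMap.range (E i) ⊔ Gs E T := by
      unfold Gs at hy ⊢
      rwa [iSup_insert] at hy
    obtain ⟨_, ⟨c, rfl⟩, b, hb, rfl⟩ := Submodule.mem_sup.1 hy'
    refine ⟨c, ?_⟩
    simp only [l, LinearMap.comp_apply]
    rw [← sub_eq_zero, ← map_sub, Submodule.mkQ_apply, Submodule.Quotient.mk_eq_zero]
    change E i c - (E i c + b) ∈ Gs E T
    rw [sub_add_cancel_left]
    exact Submodule.neg_mem _ hb

include h2 h3 hL in
lemma closed_exists (n : ℕ) : ∀ i, r i < n → ∀ T, ClosedCells E r L T →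
    ∃ T', ClosedCells E r L T' ∧ T ⊆ T' ∧ i ∈ T' ∧ FPRel (Gs E T) (Gs E T') := by
  classical
  induction n with
  | zero => exact fun i hi => absurd hi (Nat.not_lt_zero _)
  | succ n ih =>
    intro i hi T hT
    have hfin : ∀ C : Finset I, (∀ j ∈ C, r j < n) → ∃ T', ClosedCells E r L T' ∧ T ⊆ T' ∧
        (∀ j ∈ C, j ∈ T') ∧ FPRel (Gs E T) (Gs E T') := by
      intro C
      induction C using Finset.induction_on with
      | empty => exact fun _ => ⟨T, hT, subset_rfl, by simp, FPRel.refl _⟩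
      | insert a C _ ihC =>
        intro hC
        obtain ⟨T₁, a1, a2, a3, a4⟩ := ihC fun j hj => hC j (Finset.mem_insert_of_mem hj)
        obtain ⟨T₂, b1, b2, b3, b4⟩ := ih a (hC a (Finset.mem_insert_self _ _)) T₁ a1
        refine ⟨T₂, b1, a2.trans b2, ?_, a4.trans (Gs_mono E a2) (Gs_mono E b2) b4⟩
        intro j hj
        rcases Finset.mem_insert.1 hj with rfl | hj
        · exact b3
        · exact b2 (a3 j hj)
    have hC : ∃ C : Finset I, (∀ j ∈ C, r j < r i) ∧ ∀ c ∈ L i, E i c ∈ Gs E (C : Set I) := by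
      obtain ⟨X, hX⟩ := hL i
      have : ∀ c : X, ∃ C : Finset I, (∀ j ∈ C, r j < r i) ∧ E i c ∈ Gs E (C : Set I) := by
        rintro ⟨c, hc⟩
        have hcL : c ∈ L i := hX ▸ Submodule.subset_span hc
        obtain ⟨s, d, hs, hd⟩ := mem_Gs E (h2 i c hcL)
        exact ⟨s, hs, hd ▸ Submodule.sum_mem _ fun j hj => E_mem_Gs E hj _⟩
      choose C hC hC' using this
      refine ⟨Finset.univ.biUnion C, ?_, ?_⟩
      · intro j hj
        obtain ⟨c, -, hc⟩ := Finset.mem_biUnion.1 hj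
        exact hC c j hc
      · intro c hc
        rw [← hX] at hc
        have : Submodule.span S (X : Set (Fin (m i) → S)) ≤
            (Gs E ((Finset.univ.biUnion C : Finset I) : Set I)).comap (E i) := by
          refine Submodule.span_le.2 fun c hc => ?_
          refine Gs_mono E ?_ (hC' ⟨c, hc⟩)
          exact fun j hj => Finset.mem_biUnion.2 ⟨_, Finset.mem_univ _, hj⟩
        exact this hc
    obtain ⟨C, hCr, hCL⟩ := hC
    obtain ⟨T₁, a1, a2, a3, a4⟩ := hfin C fun j hj => by have := hCr j hj; omega
    have hsub : (C : Set I) ⊆ T₁ ∩ {j | r j < r i} := fun j hj => ⟨a3 j hj, hCr j hj⟩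
    obtain ⟨b1, b2⟩ := closed_add E r L hL h3 a1 (i := i) fun c hc =>
      Gs_mono E hsub (hCL c hc)
    exact ⟨insert i T₁, b1, a2.trans (Set.subset_insert _ _), Set.mem_insert _ _,
      a4.trans (Gs_mono E a2) (Gs_mono E (Set.subset_insert _ _)) b2⟩

include h2 h3 hL in
theorem isHill_of_cells (h1 : Gs E Set.univ = ⊤) : IsHill S G := by
  classical
  refine ⟨{N | ∃ T, ClosedCells E r L T ∧ Gs E T = N}, ?_, ?_⟩
  · intro c hc
    have hc' : ∀ N ∈ c, ∃ T, ClosedCells E r L T ∧ Gs E T = N := fun N hN => hc hN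
    choose! T hT hT' using hc'
    refine ⟨⋃ N ∈ c, T N, ?_, ?_⟩
    · intro i hi x hx
      simp only [Set.mem_iUnion] at hi
      obtain ⟨N, hN, hi⟩ := hi
      refine Gs_mono E (Set.inter_subset_inter_left _ ?_) (hT N hN i hi x hx)
      exact Set.subset_biUnion_of_mem (u := T) hN
    · apply le_antisymm
      · unfold Gs
        refine iSup₂_le fun i hi => ?_
        simp only [Set.mem_iUnion] at hi
        obtain ⟨N, hN, hi⟩ := hi
        refine le_trans ?_ (le_sSup hN)
        rintro _ ⟨x, rfl⟩
        have := E_mem_Gs E hi x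
        rwa [hT' N hN] at this
      · refine sSup_le fun N hN => ?_
        rw [← hT' N hN]
        exact Gs_mono E (Set.subset_biUnion_of_mem (u := T) hN)
  · rintro _ ⟨T, hT, rfl⟩ x
    have hfin : ∀ C : Finset I, ∃ T', ClosedCells E r L T' ∧ T ⊆ T' ∧
        (∀ j ∈ C, j ∈ T') ∧ FPRel (Gs E T) (Gs E T') := by
      intro C
      induction C using Finset.induction_on with
      | empty => exact ⟨T, hT, subset_rfl, by simp, FPRel.refl _⟩
      | insert a C _ ihC =>
        obtain ⟨T₁, a1, a2, a3, a4⟩ := ihC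
        obtain ⟨T₂, b1, b2, b3, b4⟩ := closed_exists E r L h2 hL h3 (r a + 1) a (Nat.lt_succ_self _) T₁ a1
        refine ⟨T₂, b1, a2.trans b2, ?_, a4.trans (Gs_mono E a2) (Gs_mono E b2) b4⟩
        intro j hj
        rcases Finset.mem_insert.1 hj with rfl | hj
        · exact b3
        · exact b2 (a3 j hj)
    obtain ⟨s, c, -, rfl⟩ := mem_Gs E (h1 ▸ Submodule.mem_top : x ∈ Gs E Set.univ)
    obtain ⟨T', a1, a2, a3, a4⟩ := hfin s
    exact ⟨_, ⟨T', a1, rfl⟩, Gs_mono E a2,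
      Submodule.sum_mem _ fun j hj => E_mem_Gs E (a3 j hj) _, a4⟩

end Cell

section Step
variable {S : Type u} [Ring S] {M : Type u} [AddCommGroup M] [Module S M]

/-- a module over `M` -/
structure Obj (S : Type u) [Ring S] (M : Type u) [AddCommGroup M] [Module S M] where
  G : Type u
  [grp : AddCommGroup G]
  [mod : Module S G]
  p : G →ₗ[S] M

attribute [instance] Obj.grp Obj.mod

/-- lifting problems -/
structure Idx (A : Obj S M) where
  m : ℕ
  L : Submodule S (Fin m → S)
  fg : L.FG
  l : L →ₗ[S] A.G
  q : (Fin m → S) →ₗ[S] M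
  comm : ∀ y : L, A.p (l y) = q y

/-- the relations -/
noncomputable def theta (A : Obj S M) :
    (Π₀ j : Idx A, j.L) →ₗ[S] A.G × (Π₀ j : Idx A, (Fin j.m → S)) :=
  by
  classical
  exact LinearMap.prod (-(DFinsupp.lsum ℕ (fun j : Idx A => j.l)))
    (DFinsupp.mapRange.linearMap (fun j : Idx A => j.L.subtype))

lemma theta_single (A : Obj S M) [DecidableEq (Idx A)] (j : Idx A) (y : j.L) :
    theta A (DFinsupp.single j y) = (- j.l y, DFinsupp.single j (y : Fin j.m → S)) := by
  classical
  unfold theta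
  ext1
  · simp [DFinsupp.lsum_apply_apply]
    convert DFinsupp.sumAddHom_single _ _ _ <;> rfl
  · simp

theorem exists_step (A : Obj S M) : ∃ (A' : Obj S M) (i : A.G →ₗ[S] A'.G)
    (e : ∀ j : Idx A, (Fin j.m → S) →ₗ[S] A'.G), Function.Injective i ∧ A'.p ∘ₗ i = A.p ∧
    (LinearMap.range i ⊔ ⨆ j, LinearMap.range (e j) = ⊤) ∧
    (∀ (j : Idx A) (y : j.L), e j y = i (j.l y)) ∧
    (∀ (j : Idx A) c, A'.p (e j c) = j.q c) ∧
    (∀ (s : Finset (Idx A)) (c : ∀ j : Idx A, Fin j.m → S),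
      ∑ j ∈ s, e j (c j) ∈ LinearMap.range i → ∀ j ∈ s, c j ∈ j.L) := by
  classical
  let W := LinearMap.range (theta A)
  have hW : ∀ x ∈ W, ∀ j, x.2 j ∈ j.L := by
    rintro _ ⟨y, rfl⟩ j
    simp [theta]
  have hW0 : ∀ g : A.G, (g, 0) ∈ W → g = 0 := by
    rintro g ⟨y, hy⟩
    have h2 : y = 0 := by
      ext1 j
      have := congrArg (fun z => z.2 j) hy
      simpa [theta] using this
    rw [h2, map_zero] at hy
    exact (congrArg Prod.fst hy).symm
  have hWp : W ≤ LinearMap.ker (A.p.coprod (DFinsupp.lsum ℕ (fun j : Idx A => j.q))) := by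
    rw [LinearMap.range_le_ker_iff]
    refine DFinsupp.lhom_ext' fun j => LinearMap.ext fun y => ?_
    simp only [LinearMap.comp_apply, DFinsupp.lsingle_apply, theta_single, LinearMap.coprod_apply,
      map_neg, DFinsupp.lsum_single, j.comm, neg_add_cancel, LinearMap.zero_apply]
  refine ⟨⟨(A.G × (Π₀ j : Idx A, (Fin j.m → S))) ⧸ W, W.liftQ _ hWp⟩,
    W.mkQ ∘ₗ LinearMap.inl S _ _, fun j => W.mkQ ∘ₗ LinearMap.inr S _ _ ∘ₗ
      DFinsupp.lsingle (M := fun j : Idx A => (Fin j.m → S)) j, ?_, ?_, ?_, ?_, ?_, ?_⟩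
  · rw [injective_iff_map_eq_zero]
    intro g hg
    exact hW0 g ((Submodule.Quotient.mk_eq_zero _).1 hg)
  · ext x
    simp
  · rw [eq_top_iff]
    rintro y -
    obtain ⟨⟨g, x⟩, rfl⟩ := W.mkQ_surjective y
    have : ((g, x) : A.G × (Π₀ j : Idx A, (Fin j.m → S))) = (g, 0) + (0, x) := by simp
    rw [this, map_add]
    refine Submodule.add_mem_sup ⟨g, rfl⟩ ?_
    clear this
    induction x using DFinsupp.induction with
    | h0 => 
      have : ((0, 0) : A.G × (Π₀ j : Idx A, (Fin j.m → S))) = 0 := rfl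
      rw [this, map_zero]; exact Submodule.zero_mem _
    | ha j b f _ _ ih =>
      have : ((0, DFinsupp.single j b + f) : A.G × (Π₀ j : Idx A, (Fin j.m → S))) =
        (0, DFinsupp.single j b) + (0, f) := by simp
      rw [this, map_add]
      refine Submodule.add_mem _ (Submodule.mem_iSup_of_mem j ⟨b, rfl⟩) ih
  · intro j y
    have : theta A (DFinsupp.single j y) ∈ W := ⟨_, rfl⟩
    rw [theta_single] at this
    rw [← sub_eq_zero]
    simp only [LinearMap.comp_apply]
    rw [← map_sub]
    refine (Submodule.Quotient.mk_eq_zero _).2 ?_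
    convert this using 1
    simp
  · intro j c
    simp
  · rintro s c ⟨g, hg⟩ j hj
    simp only [LinearMap.comp_apply, ← map_sum] at hg
    have := (Submodule.Quotient.eq W).1 hg
    have := hW _ this j
    simpa [Prod.snd_sum, DFinsupp.finsetSum_apply, DFinsupp.single_apply, hj] using this

end Step

section Colim
variable {S : Type u} [Ring S] {M : Type u} [AddCommGroup M] [Module S M]

theorem exists_colim (A : ℕ → Obj S M) (i : ∀ n, (A n).G →ₗ[S] (A (n + 1)).G)
    (hi : ∀ n, Function.Injective (i n)) (hp : ∀ n, (A (n + 1)).p ∘ₗ i n = (A n).p) :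
    ∃ (B : Obj S M) (ι : ∀ n, (A n).G →ₗ[S] B.G), (∀ n, Function.Injective (ι n)) ∧
      (∀ n, ι (n + 1) ∘ₗ i n = ι n) ∧ (∀ x, ∃ n y, ι n y = x) ∧ ∀ n, B.p ∘ₗ ι n = (A n).p := by
  have : PreservesFilteredColimitsOfSize.{0, 0} (forget (ModuleCat.{u} S)) :=
    preservesFilteredColimitsOfSize_shrink.{0, u, 0, u} _
  have : PreservesColimitsOfShape ℕ (forget (ModuleCat.{u} S)) :=
    PreservesFilteredColimitsOfSize.preserves_filtered_colimits _
  let F : ℕ ⥤ ModuleCat.{u} S := Functor.ofSequence (X := fun n => ModuleCat.of S (A n).G)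
    (fun n => ModuleCat.ofHom (i n))
  have hF : ∀ n, F.map (homOfLE (Nat.le_add_right n 1)) = ModuleCat.ofHom (i n) :=
    fun n => Functor.ofSequence_map_homOfLE_succ _ n
  have hinj : ∀ (k n : ℕ), Function.Injective (F.map (homOfLE (Nat.le_add_right n k))) := by
    intro k
    induction k with
    | zero =>
      intro n x y h
      have : (homOfLE (Nat.le_add_right n 0)) = 𝟙 n := rfl
      simpa [this] using h
    | succ k ih =>
      intro n
      have : (homOfLE (Nat.le_add_right n (k + 1))) =
        homOfLE (Nat.le_add_right n k) ≫ homOfLE (Nat.le_add_right (n + k) 1) := rfl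
      rw [this, F.map_comp, hF]
      intro x y h
      exact ih n (hi _ h)
  let c : Cocone F := ⟨ModuleCat.of S M, NatTrans.ofSequence (fun n => ModuleCat.ofHom (A n).p)
    (fun n => by
      rw [hF]
      ext x
      exact LinearMap.congr_fun (hp n) x)⟩
  refine ⟨⟨(colimit F : ModuleCat.{u} S), (colimit.desc F c).hom⟩, fun n => (colimit.ι F n).hom,
    ?_, ?_, ?_, ?_⟩
  · intro n x y h
    obtain ⟨k, f, hf⟩ := (Concrete.colimit_rep_eq_iff_exists F (i := n) (j := n) x y).1 h
    obtain ⟨g, hg⟩ := hf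
    obtain ⟨k, rfl⟩ := Nat.exists_eq_add_of_le (leOfHom f)
    exact hinj k n hg
  · intro n
    have := colimit.w F (homOfLE (Nat.le_add_right n 1))
    rw [hF] at this
    exact congrArg ModuleCat.Hom.hom this
  · intro x
    exact Concrete.colimit_exists_rep F x
  · intro n
    exact congrArg ModuleCat.Hom.hom (colimit.ι_desc c n)

end Colim

section Cover
variable (S : Type u) [Ring S] (M : Type u) [AddCommGroup M] [Module S M]

theorem exists_hill_cover : ∃ B : Obj S M, IsHill S B.G ∧
    ∀ (m : ℕ) (L : Submodule S (Fin m → S)), L.FG → ∀ (l : L →ₗ[S] B.G) (q : (Fin m → S) →ₗ[S] M),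
      (∀ y : L, B.p (l y) = q y) →
      ∃ t : (Fin m → S) →ₗ[S] B.G, (∀ y : L, t y = l y) ∧ B.p ∘ₗ t = q := by
  classical
  choose nx hnx using exists_step (S := S) (M := M)
  obtain ⟨A, hA0, hAs⟩ : ∃ A : ℕ → Obj S M, (∀ y : (A 0).G, y = 0) ∧ ∀ n, A (n + 1) = nx (A n) :=
    ⟨fun n => Nat.rec ⟨PUnit, 0⟩ (fun _ X => nx X) n, fun y => by cases y; rfl, fun _ => rfl⟩
  have hex : ∀ n, ∃ (i : (A n).G →ₗ[S] (A (n + 1)).G)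
    (e : ∀ j : Idx (A n), (Fin j.m → S) →ₗ[S] (A (n + 1)).G),
    Function.Injective i ∧ (A (n + 1)).p ∘ₗ i = (A n).p ∧
    (LinearMap.range i ⊔ ⨆ j, LinearMap.range (e j) = ⊤) ∧
    (∀ (j : Idx (A n)) (y : j.L), e j y = i (j.l y)) ∧
    (∀ (j : Idx (A n)) c, (A (n + 1)).p (e j c) = j.q c) ∧
    (∀ (s : Finset (Idx (A n))) (c : ∀ j : Idx (A n), Fin j.m → S),
      ∑ j ∈ s, e j (c j) ∈ LinearMap.range i → ∀ j ∈ s, c j ∈ j.L) := by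
    intro n
    rw [hAs n]
    exact hnx (A n)
  choose i e hi hp hsp hel hpe hind using hex
  obtain ⟨B, ι, hι, hιi, hsurj, hpι⟩ := exists_colim A i hi hp
  have hιi' : ∀ n x, ι (n + 1) (i n x) = ι n x := fun n x => LinearMap.congr_fun (hιi n) x
  have hmono : Monotone (fun n => LinearMap.range (ι n)) := by
    refine monotone_nat_of_le_succ fun n => ?_
    rintro _ ⟨x, rfl⟩
    exact ⟨_, hιi' n x⟩
  let E : ∀ k : (Σ n, Idx (A n)), (Fin k.2.m → S) →ₗ[S] B.G := fun k => ι (k.1 + 1) ∘ₗ e k.1 k.2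
  let r : (Σ n, Idx (A n)) → ℕ := fun k => k.1
  have hrange : ∀ n, LinearMap.range (ι n) = Gs E {k | r k < n} := by
    intro n
    induction n with
    | zero =>
      apply le_antisymm
      · rintro _ ⟨x, rfl⟩
        rw [hA0 x, map_zero]
        exact Submodule.zero_mem _
      · unfold Gs
        exact iSup₂_le fun k hk => absurd hk (Nat.not_lt_zero _)
    | succ n ih =>
      apply le_antisymm
      · rw [LinearMap.range_eq_map, ← hsp n, Submodule.map_sup, Submodule.map_iSup]
        refine sup_le ?_ (iSup_le fun j => ?_)
        · rw [← LinearMap.range_comp, hιi n, ih]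
          exact Gs_mono E fun k hk => Nat.lt_succ_of_lt hk
        · rintro _ ⟨_, ⟨x, rfl⟩, rfl⟩
          have : (⟨n, j⟩ : Σ n, Idx (A n)) ∈ {k | r k < n + 1} := Nat.lt_succ_self n
          exact E_mem_Gs E this x
      · unfold Gs
        refine iSup₂_le fun k hk => ?_
        refine le_trans ?_ (hmono (Nat.succ_le_of_lt hk))
        rintro _ ⟨x, rfl⟩
        exact ⟨_, rfl⟩
  refine ⟨B, ?_, ?_⟩
  · refine isHill_of_cells E r (fun k => k.2.L) ?_ (fun k => k.2.fg) ?_ ?_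
    · rintro ⟨n, j⟩ c hc
      rw [← hrange]
      refine ⟨j.l ⟨c, hc⟩, ?_⟩
      change _ = ι (n + 1) (e n j c)
      rw [hel n j ⟨c, hc⟩, hιi']
    · intro n s c hs hsum
      rw [← hrange] at hsum
      let mk : Idx (A n) ↪ Σ n, Idx (A n) := Function.Embedding.sigmaMk (β := fun n => Idx (A n)) n
      have hs' : s = (s.preimage mk mk.injective.injOn).map mk := by
        ext ⟨k, j⟩
        simp only [Finset.mem_map, Finset.mem_preimage]
        constructor
        · intro h
          obtain rfl : k = n := hs _ h
          exact ⟨j, h, rfl⟩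
        · rintro ⟨a, ha, h⟩
          rwa [← h]
      rw [hs', Finset.sum_map] at hsum
      obtain ⟨g, hg⟩ := hsum
      have key := hind n (s.preimage mk mk.injective.injOn) (fun j => c ⟨n, j⟩)
        ⟨g, by
          apply hι (n + 1)
          rw [hιi', hg, map_sum]
          rfl⟩
      rintro ⟨k, j⟩ hk
      obtain rfl : k = n := hs _ hk
      exact key j (Finset.mem_preimage.2 hk)
    · rw [eq_top_iff]
      rintro x -
      obtain ⟨n, y, rfl⟩ := hsurj x
      have : ι n y ∈ Gs E {k | r k < n} := by rw [← hrange]; exact ⟨y, rfl⟩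
      exact Gs_mono E (Set.subset_univ _) this
  · intro m L hL l q hlq
    have hn : ∃ n, LinearMap.range l ≤ LinearMap.range (ι n) := by
      have : Module.Finite S L := Module.Finite.iff_fg.2 hL
      obtain ⟨X, hX⟩ := Module.Finite.range l |> Module.Finite.iff_fg.1
      choose f hf using hsurj
      refine ⟨X.sup f, ?_⟩
      rw [← hX, Submodule.span_le]
      intro x hx
      exact hmono (Finset.le_sup (f := f) hx) (hf x)
    obtain ⟨n, hn⟩ := hn
    choose l' hl' using fun y => hn ⟨y, rfl⟩
    let l'' : L →ₗ[S] (A n).G :=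
      { toFun := l'
        map_add' := fun x y => hι n (by rw [map_add, hl', hl', hl', map_add])
        map_smul' := fun a x => hι n (by rw [map_smul, hl', hl', map_smul]; rfl) }
    have hl'' : ∀ y, ι n (l'' y) = l y := hl'
    let j : Idx (A n) := ⟨m, L, hL, l'', q, fun y => by
      rw [← hpι n, LinearMap.comp_apply, hl'', hlq]⟩
    refine ⟨ι (n + 1) ∘ₗ e n j, fun y => ?_, ?_⟩
    · rw [LinearMap.comp_apply, hel n j y, hιi']
      exact hl'' y
    · ext1 x
      rw [← LinearMap.comp_assoc, hpι]
      ext1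
      exact hpe n j _

end Cover

section ExtInterface
variable {R : Type u} [Ring R]

lemma lift_of_ext {A B T : Type u} [AddCommGroup A] [Module Rᵐᵒᵖ A] [AddCommGroup B]
    [Module Rᵐᵒᵖ B] [AddCommGroup T] [Module Rᵐᵒᵖ T] (p : A →ₗ[Rᵐᵒᵖ] B)
    (hp : Function.Surjective p)
    (h : Subsingleton (Abelian.Ext (C := RightMod R) (ModuleCat.of Rᵐᵒᵖ T)
      (ModuleCat.of Rᵐᵒᵖ (LinearMap.ker p)) 1)) (f : T →ₗ[Rᵐᵒᵖ] B) :
    ∃ g : T →ₗ[Rᵐᵒᵖ] A, p ∘ₗ g = f := by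
  have hS := LinearMap.shortExact_shortComplexKer hp
  obtain ⟨x, hx⟩ := Abelian.Ext.covariant_sequence_exact₃ (ModuleCat.of Rᵐᵒᵖ T) hS
    (Abelian.Ext.mk₀ (ModuleCat.ofHom f : ModuleCat.of Rᵐᵒᵖ T ⟶ ModuleCat.of Rᵐᵒᵖ B)) (zero_add 1)
    (@Subsingleton.elim _ h _ _)
  obtain ⟨g, rfl⟩ := Abelian.Ext.addEquiv₀.symm.surjective x
  refine ⟨g.hom, ?_⟩
  have := Abelian.Ext.addEquiv₀.symm.injective
    ((Abelian.Ext.mk₀_comp_mk₀ g (ModuleCat.ofHom p)).symm.trans hx)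
  exact congrArg ModuleCat.Hom.hom this

lemma extend_of_ext {A B N : Type u} [AddCommGroup A] [Module Rᵐᵒᵖ A] [AddCommGroup B]
    [Module Rᵐᵒᵖ B] [AddCommGroup N] [Module Rᵐᵒᵖ N] (p : A →ₗ[Rᵐᵒᵖ] B)
    (hp : Function.Surjective p)
    (h : Subsingleton (Abelian.Ext (C := RightMod R) (ModuleCat.of Rᵐᵒᵖ B)
      (ModuleCat.of Rᵐᵒᵖ N) 1)) (f : LinearMap.ker p →ₗ[Rᵐᵒᵖ] N) :
    ∃ g : A →ₗ[Rᵐᵒᵖ] N, ∀ x : LinearMap.ker p, g x = f x := by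
  have hS := LinearMap.shortExact_shortComplexKer hp
  obtain ⟨x, hx⟩ := Abelian.Ext.contravariant_sequence_exact₁ hS (ModuleCat.of Rᵐᵒᵖ N)
    (Abelian.Ext.mk₀ (ModuleCat.ofHom f : ModuleCat.of Rᵐᵒᵖ _ ⟶ ModuleCat.of Rᵐᵒᵖ N)) (add_zero 1)
    (@Subsingleton.elim _ h _ _)
  obtain ⟨g, rfl⟩ := Abelian.Ext.addEquiv₀.symm.surjective x
  refine ⟨g.hom, fun y => ?_⟩
  have := Abelian.Ext.addEquiv₀.symm.injective
    ((Abelian.Ext.mk₀_comp_mk₀ (ModuleCat.ofHom (LinearMap.ker p).subtype) g).symm.trans hx)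
  exact LinearMap.congr_fun (congrArg ModuleCat.Hom.hom this) y

lemma extProp_of_fpInjective {J : RightMod R} (hJ : FpInjective R J) : ExtProp Rᵐᵒᵖ J := by
  intro M _ _ N hN f
  have h := hJ (ModuleCat.of Rᵐᵒᵖ (M ⧸ N)) hN
  obtain ⟨g, hg⟩ := extend_of_ext N.mkQ N.mkQ_surjective (N := J) h
    (f ∘ₗ (LinearEquiv.ofEq _ _ N.ker_mkQ).toLinearMap)
  exact ⟨g, fun x => hg ⟨x, by rw [N.ker_mkQ]; exact x.2⟩⟩

lemma fpInjective_of_extend {N : Type u} [AddCommGroup N] [Module Rᵐᵒᵖ N]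
    (hN : ∀ (m : ℕ) (L : Submodule Rᵐᵒᵖ (Fin m → Rᵐᵒᵖ)), L.FG → ∀ f : L →ₗ[Rᵐᵒᵖ] N,
      ∃ t : (Fin m → Rᵐᵒᵖ) →ₗ[Rᵐᵒᵖ] N, ∀ y : L, t y = f y) :
    FpInjective R (ModuleCat.of Rᵐᵒᵖ N) := by
  intro T hT
  obtain ⟨m, L, e, hL⟩ := Module.FinitePresentation.exists_fin Rᵐᵒᵖ T
  let p : (Fin m → Rᵐᵒᵖ) →ₗ[Rᵐᵒᵖ] T := e.symm.toLinearMap ∘ₗ L.mkQ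
  have hp : Function.Surjective p := e.symm.surjective.comp L.mkQ_surjective
  have hker : LinearMap.ker p = L := by
    rw [LinearEquiv.ker_comp, L.ker_mkQ]
  have hS := LinearMap.shortExact_shortComplexKer hp
  have hproj : Projective (ModuleCat.of Rᵐᵒᵖ (Fin m → Rᵐᵒᵖ)) :=
    (IsProjective.iff_projective _).1 inferInstance
  refine subsingleton_of_forall_eq 0 fun x => ?_
  obtain ⟨y, hy⟩ := Abelian.Ext.contravariant_sequence_exact₃ hS (ModuleCat.of Rᵐᵒᵖ N)
    (n₁ := 1) x
    (@Abelian.Ext.eq_zero_of_projective _ _ _ _ (ModuleCat.of Rᵐᵒᵖ (Fin m → Rᵐᵒᵖ)) _ 0 hproj _)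
    (add_zero 1)
  obtain ⟨f, rfl⟩ := Abelian.Ext.addEquiv₀.symm.surjective y
  obtain ⟨t, ht⟩ := hN m (LinearMap.ker p) (hker ▸ hL) f.hom
  have hf : f = ModuleCat.ofHom (LinearMap.ker p).subtype ≫ ModuleCat.ofHom t := by
    ext x
    exact (ht x).symm
  rw [← hy, hf]
  change hS.extClass.comp (Abelian.Ext.mk₀ _) _ = 0
  rw [← Abelian.Ext.mk₀_comp_mk₀]
  exact hS.extClass_comp_assoc _

lemma exists_hill_retract {P : RightMod R} (hP : FpProjective R P) :
    ∃ (B : Obj Rᵐᵒᵖ P) (i : P →ₗ[Rᵐᵒᵖ] B.G), IsHill Rᵐᵒᵖ B.G ∧ B.p ∘ₗ i = LinearMap.id := by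
  obtain ⟨B, hB, hlift⟩ := exists_hill_cover Rᵐᵒᵖ P
  have hsurj : Function.Surjective B.p := by
    intro x
    obtain ⟨t, -, ht⟩ := hlift 1 ⊥ Submodule.fg_bot 0
      ((LinearMap.toSpanSingleton Rᵐᵒᵖ P x) ∘ₗ LinearMap.proj 0)
      (by rintro ⟨y, hy⟩; rw [Submodule.mem_bot] at hy; subst hy; simp)
    refine ⟨t 1, ?_⟩
    have := LinearMap.congr_fun ht 1
    simpa using this
  have hker : FpInjective R (ModuleCat.of Rᵐᵒᵖ (LinearMap.ker B.p)) := by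
    refine fpInjective_of_extend fun m L hL f => ?_
    obtain ⟨t, ht, ht'⟩ := hlift m L hL ((LinearMap.ker B.p).subtype ∘ₗ f) 0
      (fun y => by simp)
    refine ⟨t.codRestrict _ fun c => LinearMap.congr_fun ht' c, fun y => Subtype.ext (ht y)⟩
  obtain ⟨i, hi⟩ := lift_of_ext B.p hsurj (T := P) (hP _ hker) LinearMap.id
  exact ⟨B, i, hB, hi⟩

lemma FpInjective.of_iso {X Y : RightMod R} (e : X ≅ Y) (h : FpInjective R X) :
    FpInjective R Y := by
  intro T hT
  have := h T hT
  refine subsingleton_of_forall_eq 0 fun x => ?_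
  have h1 : x.comp (Abelian.Ext.mk₀ e.inv) (add_zero 1) = 0 := Subsingleton.elim _ _
  have h2 := congrArg (fun z => z.comp (Abelian.Ext.mk₀ e.hom) (add_zero 1)) h1
  simpa using h2

lemma homExact_of (J : CochainComplex (RightMod R) ℤ) (hJacyclic : ∀ n : ℤ, J.ExactAt n)
    (hJcocycles : ∀ n : ℤ, FpInjective R (kernel (J.d n (n + 1)))) :
    HomExact (J := fun n => J.X n) (fun n => (J.d n (n + 1)).hom) := by
  intro n T _ _ hT f hf
  let d := (J.d n (n + 1)).hom
  have hfr : ∀ x, f x ∈ LinearMap.range d := by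
    intro x
    have hex := (J.exactAt_iff' n (n + 1) (n + 1 + 1) (by simp) (by simp)).1 (hJacyclic (n + 1))
    exact (ShortComplex.moduleCat_exact_iff _).1 hex (f x) (LinearMap.congr_fun hf x)
  have hk : FpInjective R (ModuleCat.of Rᵐᵒᵖ (LinearMap.ker d.rangeRestrict)) := by
    rw [LinearMap.ker_rangeRestrict]
    exact (hJcocycles n).of_iso (ModuleCat.kernelIsoKer _)
  obtain ⟨g, hg⟩ := lift_of_ext d.rangeRestrict d.surjective_rangeRestrict
    (hk (ModuleCat.of Rᵐᵒᵖ T) hT) (f.codRestrict _ hfr)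
  refine ⟨g, ?_⟩
  ext x
  exact congrArg Subtype.val (LinearMap.congr_fun hg x)

end ExtInterface

/-- If `P^•` is a complex of fp-projective right `R`-modules and `J^•` is an
acyclic complex of fp-injective right `R`-modules whose modules of cocycles
`Z^n = ker (J^n → J^{n+1})` are all fp-injective, then any morphism of
complexes `P^• → J^•` is homotopic to zero. -/
theorem homotopic_to_zero {R : Type u} [Ring R]
    (P J : CochainComplex (RightMod R) ℤ)
    (hP : ∀ n : ℤ, FpProjective R (P.X n))
    (hJacyclic : ∀ n : ℤ, J.ExactAt n)
    (hJ : ∀ n : ℤ, FpInjective R (J.X n))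
    (hJcocycles : ∀ n : ℤ, FpInjective R (kernel (J.d n (n + 1))))
    (φ : P ⟶ J) :
    Nonempty (Homotopy φ 0) := by
  choose B i hB hi using fun n => exists_hill_retract (hP n)
  have hi' : ∀ n x, (B n).p (i n x) = x := fun n x => LinearMap.congr_fun (hi n) x
  have hdJ : ∀ n x, J.d (n + 1) (n + 1 + 1) (J.d n (n + 1) x) = 0 := fun n x =>
    LinearMap.congr_fun (congrArg ModuleCat.Hom.hom (J.d_comp_d n (n + 1) (n + 1 + 1))) x
  have hdP : ∀ n x, P.d (n + 1) (n + 1 + 1) (P.d n (n + 1) x) = 0 := fun n x =>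
    LinearMap.congr_fun (congrArg ModuleCat.Hom.hom (P.d_comp_d n (n + 1) (n + 1 + 1))) x
  have hφ : ∀ n x, J.d n (n + 1) (φ.f n x) = φ.f (n + 1) (P.d n (n + 1) x) := fun n x =>
    LinearMap.congr_fun (congrArg ModuleCat.Hom.hom (φ.comm n (n + 1))) x
  obtain ⟨s, hs⟩ := null_of_hill (S := Rᵐᵒᵖ) (J := fun n => J.X n)
    (fun n => (J.d n (n + 1)).hom) (Q := fun n => (B (n + 1)).G)
    (fun n => i (n + 1 + 1) ∘ₗ (P.d (n + 1) (n + 1 + 1)).hom ∘ₗ (B (n + 1)).p)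
    (fun n => LinearMap.ext fun x => hdJ n x)
    (fun n => LinearMap.ext fun x => by
      simp only [LinearMap.comp_apply, hi', LinearMap.zero_apply]
      exact (congrArg (i (n + 1 + 1 + 1)) (hdP (n + 1) ((B (n + 1)).p x))).trans (map_zero _))
    (homExact_of J hJacyclic hJcocycles)
    (fun n => extProp_of_fpInjective (hJ n)) (fun n => hB (n + 1))
    (fun n => (φ.f (n + 1)).hom ∘ₗ (B (n + 1)).p)
    (fun n => LinearMap.ext fun x => by
      simp only [LinearMap.comp_apply, hi']
      exact hφ (n + 1) _)
  let t : ∀ n, P.X (n + 1) ⟶ J.X n := fun n => ModuleCat.ofHom (s n ∘ₗ i (n + 1))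
  have ht : ∀ n, φ.f (n + 1) = t n ≫ J.d n (n + 1) + P.d (n + 1) (n + 1 + 1) ≫ t (n + 1) := by
    intro n
    ext x
    have := LinearMap.congr_fun (hs n) (i (n + 1) x)
    simp only [LinearMap.comp_apply, LinearMap.add_apply, hi'] at this
    exact this
  let hom : ∀ a b, P.X a ⟶ J.X b := fun a b =>
    if h : b + 1 = a then eqToHom (by rw [h]) ≫ t b else 0
  have hom_eq : ∀ b, hom (b + 1) b = t b := fun b => by simp [hom]
  refine ⟨⟨hom, fun a b hab => dif_neg hab, fun n => ?_⟩⟩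
  obtain ⟨n, rfl⟩ : ∃ k, n = k + 1 := ⟨n - 1, by ring⟩
  rw [dNext_eq hom (show (ComplexShape.up ℤ).Rel (n + 1) (n + 1 + 1) from rfl),
    prevD_eq hom (show (ComplexShape.up ℤ).Rel n (n + 1) from rfl), hom_eq, hom_eq, ht n,
    HomologicalComplex.zero_f, add_zero]
  exact add_comm _ _

end Stmt2
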